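/- arXiv:math/0702114 — 2 statements merged into one kernel-verified Lean document; each statement's English description precedes it below -/
import Mathlib

section
/- For every triple of indices 1 ≤ i < j < k ≤ 6, the only common zero in ℂ⁴ of the four polynomials Fᵢ, Fⱼ, F_k and S is the point 0 (i.e. no three of the six planes meet the quadric S in a common point of ℙ³(ℂ)). -/
open MvPolynomial

/-- The quadric `S = y₀·y₁ − y₂·y₃`. -/
noncomputable def polyS : MvPolynomial (Fin 4) ℂ := X 0 * X 1 - X 2 * X 3

/-- The six linear forms `F₁, …, F₆` (indexed by `Fin 6`). -/
noncomputable def polyF : Fin 6 → MvPolynomial (Fin 4) ℂ :=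
  ![X 0,
    X 1,
    4 * X 0 - 2 * X 2 - 2 * X 3 + X 1,
    X 0 - 2 * X 2 - 2 * X 3 + 4 * X 1,
    X 0 + X 2 + X 3 + X 1,
    X 0 - X 2 - X 3 + X 1]

/-!
Read a point `y` as the matrix `M = !![y₀, y₂; y₃, y₁]`. Then `S` is `det M`, and each `Fᵢ` is the
value `pᵀ M p = y₀ p₀² + (y₂ + y₃) p₀ p₁ + y₁ p₁²` at a vector `p` with integer entries, no two of
the six vectors being proportional. A binary quadratic form with three zeros on the projective line
vanishes, so three of the planes meet exactly in the alternating matrices. The determinant of an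
alternating `2 × 2` matrix is the square of its off-diagonal entry, so on the quadric `M = 0`.
-/

open scoped Matrix

theorem dotProduct_mulVec_self_fin_two {R : Type*} [CommSemiring R]
    (A : Matrix (Fin 2) (Fin 2) R) (u : Fin 2 → R) :
    u ⬝ᵥ A *ᵥ u = A 0 0 * u 0 ^ 2 + (A 0 1 + A 1 0) * (u 0 * u 1) + A 1 1 * u 1 ^ 2 := by
  simp only [Matrix.mulVec, Matrix.vec2_dotProduct]
  ring

section

variable {R : Type*} [CommRing R]

theorem det_projVandermonde_ne_zero [IsDomain R] {n : ℕ} {v w : Fin n → R}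
    (hvw : Pairwise fun i j ↦ v i * w j ≠ v j * w i) :
    (Matrix.projVandermonde v w).det ≠ 0 := by
  simp only [Matrix.det_projVandermonde, Finset.prod_ne_zero_iff, Finset.mem_Ioi, sub_ne_zero]
  exact fun i _ j hij ↦ hvw hij.ne'

theorem eq_zero_of_projVandermonde_mulVec_eq_zero [IsDomain R] {n : ℕ} {v w c : Fin n → R}
    (hvw : Pairwise fun i j ↦ v i * w j ≠ v j * w i)
    (hc : Matrix.projVandermonde v w *ᵥ c = 0) : c = 0 :=
  Matrix.eq_zero_of_mulVec_eq_zero (det_projVandermonde_ne_zero hvw) hc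

theorem forall_dotProduct_mulVec_self_eq_zero_of_three [IsDomain R] {A : Matrix (Fin 2) (Fin 2) R}
    {p : Fin 3 → Fin 2 → R} (hp : Pairwise fun a b ↦ p a 0 * p b 1 ≠ p b 0 * p a 1)
    (hA : ∀ a, p a ⬝ᵥ A *ᵥ p a = 0) (u : Fin 2 → R) : u ⬝ᵥ A *ᵥ u = 0 := by
  have hcoeff : ![A 1 1, A 0 1 + A 1 0, A 0 0] = 0 := by
    refine eq_zero_of_projVandermonde_mulVec_eq_zero hp (funext fun a ↦ ?_)
    rw [Pi.zero_apply, ← hA a, dotProduct_mulVec_self_fin_two, Matrix.mulVec,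
      Matrix.vec3_dotProduct]
    simp only [Matrix.projVandermonde_apply, Fin.coe_ofNat_eq_mod, Nat.zero_mod, Nat.one_mod,
      Nat.mod_succ, Fin.rev_zero, Fin.reduceLast, Fin.reduceRev, Matrix.cons_val]
    ring
  obtain ⟨h₁₁, hoff, h₀₀⟩ : A 1 1 = 0 ∧ A 0 1 + A 1 0 = 0 ∧ A 0 0 = 0 := by
    simpa using hcoeff
  rw [dotProduct_mulVec_self_fin_two, h₀₀, hoff, h₁₁]
  ring

theorem eq_zero_of_forall_dotProduct_mulVec_self_of_det_eq_zero [IsReduced R]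
    {A : Matrix (Fin 2) (Fin 2) R} (hA : ∀ u, u ⬝ᵥ A *ᵥ u = 0) (hdet : A.det = 0) : A = 0 := by
  have h₀₀ : A 0 0 = 0 := by simpa [dotProduct_mulVec_self_fin_two] using hA ![1, 0]
  have h₁₁ : A 1 1 = 0 := by simpa [dotProduct_mulVec_self_fin_two] using hA ![0, 1]
  have hoff : A 0 1 + A 1 0 = 0 := by
    simpa [dotProduct_mulVec_self_fin_two, h₀₀, h₁₁] using hA ![1, 1]
  have hsq : A 0 1 ^ 2 = 0 := by
    rw [Matrix.det_fin_two] at hdet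
    linear_combination hdet - A 1 1 * h₀₀ + A 0 1 * hoff
  have h₀₁ : A 0 1 = 0 := pow_eq_zero_iff two_ne_zero |>.1 hsq
  have h₁₀ : A 1 0 = 0 := by simpa [h₀₁] using hoff
  ext a b
  fin_cases a <;> fin_cases b
  exacts [h₀₀, h₀₁, h₁₀, h₁₁]

end

/-- The point `y` of `4`-space as a `2 × 2` matrix, arranged so that `S` is the determinant and
`y₀, y₁` are the diagonal entries. -/
def coordMatrix {R : Type*} (y : Fin 4 → R) : Matrix (Fin 2) (Fin 2) R :=
  !![y 0, y 2; y 3, y 1]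

theorem coordMatrix_eq_zero_iff {R : Type*} [Zero R] {y : Fin 4 → R} :
    coordMatrix y = 0 ↔ y = 0 := by
  refine ⟨fun h ↦ funext fun l ↦ ?_, ?_⟩
  · fin_cases l
    exacts [congrFun₂ h 0 0, congrFun₂ h 1 1, congrFun₂ h 0 1, congrFun₂ h 1 0]
  · rintro rfl
    ext a b
    fin_cases a <;> fin_cases b <;> rfl

/-- Homogeneous coordinates `(p, q)` of the point of the projective line attached to each plane:
the coefficients of `Fᵢ` at `y₀, y₂, y₃, y₁` are `p ^ 2, p * q, p * q, q ^ 2`. -/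
def planePoint : Fin 6 → Fin 2 → ℂ :=
  ![![1, 0], ![0, 1], ![2, -1], ![1, -2], ![1, 1], ![1, -1]]

theorem pairwise_planePoint_mul_ne_mul :
    Pairwise fun i j ↦ planePoint i 0 * planePoint j 1 ≠ planePoint j 0 * planePoint i 1 := by
  intro i j hij
  fin_cases i <;> fin_cases j <;> first | exact absurd rfl hij | norm_num [planePoint]

theorem eval_polyS (x : Fin 4 → ℂ) : eval x polyS = (coordMatrix x).det := by
  simp [polyS, coordMatrix]

theorem eval_polyF (x : Fin 4 → ℂ) (i : Fin 6) :
    eval x (polyF i) = planePoint i ⬝ᵥ coordMatrix x *ᵥ planePoint i := by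
  rw [dotProduct_mulVec_self_fin_two]
  fin_cases i <;> simp [polyF, planePoint, coordMatrix] <;> ring

/-- No three of the six planes meet the quadric `S` in a common point of `ℙ³(ℂ)`:
the only common zero in `ℂ⁴` of `Fᵢ, Fⱼ, F_k, S` is `0`. -/
theorem no_three_planes_meet_quadric (i j k : Fin 6) (hij : i < j) (hjk : j < k)
    (x : Fin 4 → ℂ)
    (hi : eval x (polyF i) = 0) (hj : eval x (polyF j) = 0)
    (hk : eval x (polyF k) = 0) (hS : eval x polyS = 0) :
    x = 0 := by
  have hinj : Function.Injective ![i, j, k] := StrictMono.injective (by simp [hij, hjk])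
  have hzero (a : Fin 3) : planePoint (![i, j, k] a) ⬝ᵥ coordMatrix x *ᵥ
      planePoint (![i, j, k] a) = 0 := by
    rw [← eval_polyF]
    fin_cases a
    exacts [hi, hj, hk]
  have halt : ∀ u, u ⬝ᵥ coordMatrix x *ᵥ u = 0 :=
    forall_dotProduct_mulVec_self_eq_zero_of_three
      (pairwise_planePoint_mul_ne_mul.comp_of_injective hinj) hzero
  exact coordMatrix_eq_zero_iff.1 <|
    eq_zero_of_forall_dotProduct_mulVec_self_of_det_eq_zero halt (eval_polyS x ▸ hS)
end

section
/- The complex vector space of homogeneous polynomials g of degree 6 in ℂ[y₀,y₁,y₂,y₃] satisfying, for every pair 1 ≤ i < j ≤ 6 and every x ∈ ℂ⁴∖{0} with Fᵢ(x) = Fⱼ(x) = S(x) = 0, both g(x) = 0 and Σₜ (∂g/∂yₜ)(x)·wₜ = 0 for every w ∈ ℂ⁴ with Fᵢ(w) = Fⱼ(w) = 0, has dimension 29 (equivalently, these conditions at the 30 cusps have rank exactly 55 on the 84-dimensional space of sextic forms). -/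
open MvPolynomial

/-- The sextic `B₆ = F₁·F₂·F₃·F₄·F₅·F₆ − S³`. -/
noncomputable def polyB6 : MvPolynomial (Fin 4) ℂ := (∏ i : Fin 6, polyF i) - polyS ^ 3
/-- The linear functional `g ↦ Σₜ (∂g/∂yₜ)(x)·wₜ` (the differential of `g` at `x`
evaluated on the vector `w`). -/
noncomputable def dirDeriv (x w : Fin 4 → ℂ) : MvPolynomial (Fin 4) ℂ →ₗ[ℂ] ℂ :=
  ∑ t : Fin 4, w t •
    ((aeval x : MvPolynomial (Fin 4) ℂ →ₐ[ℂ] ℂ).toLinearMap ∘ₗ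
      (pderiv t : Derivation ℂ (MvPolynomial (Fin 4) ℂ) (MvPolynomial (Fin 4) ℂ)).toLinearMap)

/-- The space of homogeneous sextic forms `g` which vanish at every cusp of `B₆ = 0`
(the points with `Fᵢ = Fⱼ = S = 0`, `i < j`) and whose differential at each such cusp
vanishes on the `2`-plane `Fᵢ = Fⱼ = 0`. -/
noncomputable def sexticsAdaptedToCusps : Submodule ℂ (MvPolynomial (Fin 4) ℂ) :=
  homogeneousSubmodule (Fin 4) ℂ 6 ⊓
    ⨅ (i : Fin 6) (j : Fin 6) (_ : i < j) (x : Fin 4 → ℂ)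
      (_ : x ≠ 0 ∧ eval x (polyF i) = 0 ∧ eval x (polyF j) = 0 ∧ eval x polyS = 0),
      (LinearMap.ker (aeval x : MvPolynomial (Fin 4) ℂ →ₐ[ℂ] ℂ).toLinearMap ⊓
        ⨅ (w : Fin 4 → ℂ) (_ : eval w (polyF i) = 0 ∧ eval w (polyF j) = 0),
          LinearMap.ker (dirDeriv x w))

/-!
All six linear forms vanish at the vertex `(0, 0, 1, -1)`. Projection from it exhibits the quadric
`S = 0` as the double cover of the plane branched along a conic, and turns the six planes into
tangent lines of that conic. The cusps are the points of the quadric over the fifteen nodes, the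
pairwise intersections of these lines.

Every form can be written uniquely as `a + d b + S h`, where `a` and `b` are forms in the three
coordinates of the plane and `d` is a linear form whose square is the equation of the conic modulo
`S`. By Euler's identity, the derivative condition at a cusp only concerns the direction of the
vertex, where `S` and `d` have derivatives `d` and `2`. A sextic is therefore adapted if and only
if `a` and `b` vanish at the nodes and `h` vanishes at the cusps. The nodes impose independent
conditions on forms of degree at least `4`, so no nonzero form of degree at most `4` vanishes at
all of them; dividing the quartic `h` by `S` once more shows that it is `S` times a quadratic form.
The dimension is `(28 - 15) + (21 - 15) + 10`.
-/

theorem eval_smul_of_isHomogeneous {σ R : Type*} [CommSemiring R] {φ : MvPolynomial σ R} {n : ℕ}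
    (hφ : φ.IsHomogeneous n) (c : R) (x : σ → R) : eval (c • x) φ = c ^ n * eval x φ := by
  simp only [eval_eq, Finset.mul_sum, Pi.smul_apply, smul_eq_mul, mul_pow,
    Finset.prod_mul_distrib, Finset.prod_pow_eq_pow_sum]
  refine Finset.sum_congr rfl fun d hd ↦ ?_
  have hdeg : ∑ i ∈ d.support, d i = n := by
    rw [← Finsupp.degree_apply, Finsupp.degree_eq_weight_one]
    exact hφ (mem_support_iff.1 hd)
  rw [hdeg]
  ring

theorem finrank_homogeneousSubmodule (σ R : Type*) [Fintype σ] [CommRing R] [Nontrivial R]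
    (n : ℕ) : Module.finrank R (homogeneousSubmodule σ R n) = (Fintype.card σ).multichoose n := by
  classical
  let exponents : {d : σ →₀ ℕ | d.degree = n} ≃ Sym σ n := (Sym.equivNatSum σ n).symm
  rw [homogeneousSubmodule_eq_finsupp_supported,
    (AddMonoidAlgebra.supportedEquivFinsupp (R := R) (S := R) _).finrank_eq,
    (Finsupp.domLCongr exponents).finrank_eq, Module.finrank_finsupp_self,
    Sym.card_sym_eq_multichoose]

instance {σ R : Type*} [Finite σ] [CommSemiring R] (n : ℕ) :
    Module.Finite R (homogeneousSubmodule σ R n) :=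
  Module.Finite.iff_fg.2 (homogeneousSubmodule_fg σ R n)

instance {R M N : Type*} [Semiring R] [AddCommMonoid M] [Module R M] [AddCommMonoid N]
    [Module R N] (p : Submodule R M) (q : Submodule R N) [Module.Finite R p] [Module.Finite R q] :
    Module.Finite R (p.prod q) :=
  Module.Finite.iff_fg.2 ((Module.Finite.iff_fg.1 ‹_›).prod (Module.Finite.iff_fg.1 ‹_›))

theorem finrank_submodule_prod {R M N : Type*} [Ring R] [StrongRankCondition R] [AddCommGroup M]
    [Module R M] [AddCommGroup N] [Module R N] (p : Submodule R M) (q : Submodule R N)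
    [Module.Finite R p] [Module.Free R p] [Module.Finite R q] [Module.Free R q] :
    Module.finrank R (p.prod q) = Module.finrank R p + Module.finrank R q := by
  have hrange : LinearMap.range (p.subtype.prodMap q.subtype) = p.prod q := by
    rw [LinearMap.range_prodMap, p.range_subtype, q.range_subtype]
  rw [← hrange, LinearMap.finrank_range_of_inj
    (Function.Injective.prodMap p.subtype_injective q.subtype_injective), Module.finrank_prod]

theorem finrank_map_of_injective {R M N : Type*} [Semiring R] [AddCommMonoid M] [Module R M]
    [AddCommMonoid N] [Module R N] {f : M →ₗ[R] N} (hf : Function.Injective f)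
    (p : Submodule R M) : Module.finrank R (p.map f) = Module.finrank R p :=
  (p.equivMapOfInjective f hf).finrank_eq.symm

section VanishingForms

variable {σ κ K : Type*} [Field K]

/-- The forms of degree `n` vanishing at all the points `p c`: the degree `n` part of the
homogeneous ideal of these points, given by representatives in affine space. -/
noncomputable def vanishingForms (p : κ → σ → K) (n : ℕ) : Submodule K (MvPolynomial σ K) :=
  homogeneousSubmodule σ K n ⊓ ⨅ c, LinearMap.ker (aeval (p c)).toLinearMap

/-- The points `p c` impose independent conditions on forms of degree `n`: such a form can take
arbitrary values on the chosen affine representatives. -/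
def ImposesIndependentConditions (p : κ → σ → K) (n : ℕ) : Prop :=
  ∀ y : κ → K, ∃ f : MvPolynomial σ K, f.IsHomogeneous n ∧ ∀ c, eval (p c) f = y c

theorem mem_vanishingForms {p : κ → σ → K} {n : ℕ} {f : MvPolynomial σ K} :
    f ∈ vanishingForms p n ↔ f.IsHomogeneous n ∧ ∀ c, eval (p c) f = 0 := by
  simp [vanishingForms]

instance [Finite σ] (p : κ → σ → K) (n : ℕ) : Module.Finite K (vanishingForms p n) :=
  Submodule.finiteDimensional_of_le (inf_le_left : _ ≤ homogeneousSubmodule σ K n)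

theorem finrank_vanishingForms_add_card [Fintype σ] [Fintype κ] {p : κ → σ → K} {n : ℕ}
    (hp : ImposesIndependentConditions p n) :
    Module.finrank K (vanishingForms p n) + Fintype.card κ = (Fintype.card σ).multichoose n := by
  let ev : homogeneousSubmodule σ K n →ₗ[K] κ → K :=
    LinearMap.pi fun c ↦ (aeval (p c)).toLinearMap ∘ₗ (homogeneousSubmodule σ K n).subtype
  have hker : (LinearMap.ker ev).map (homogeneousSubmodule σ K n).subtype =
      vanishingForms p n := by
    ext f
    simp [mem_vanishingForms, ev, funext_iff, and_comm]
  have hrange : LinearMap.range ev = ⊤ := by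
    refine LinearMap.range_eq_top.2 fun y ↦ ?_
    obtain ⟨f, hf, hfy⟩ := hp y
    exact ⟨⟨f, hf⟩, by ext c; simpa [ev, coe_aeval_eq_eval] using hfy c⟩
  have hrank := ev.finrank_range_add_finrank_ker
  rwa [hrange, finrank_top, Module.finrank_pi, finrank_homogeneousSubmodule, add_comm,
    ← finrank_map_of_injective (Submodule.subtype_injective _), hker] at hrank

theorem vanishingForms_eq_bot_of_succ [Nonempty σ] {p : κ → σ → K} {n : ℕ}
    (h : vanishingForms p (n + 1) = ⊥) : vanishingForms p n = ⊥ := by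
  obtain ⟨i⟩ := ‹Nonempty σ›
  refine (Submodule.eq_bot_iff _).2 fun f hf ↦ ?_
  obtain ⟨hom, hzero⟩ := mem_vanishingForms.1 hf
  have hmem : f * X i ∈ vanishingForms p (n + 1) :=
    mem_vanishingForms.2 ⟨hom.mul (isHomogeneous_X K i), fun c ↦ by simp [hzero c]⟩
  rw [h, Submodule.mem_bot] at hmem
  exact (mul_eq_zero.1 hmem).resolve_right (X_ne_zero i)

theorem imposesIndependentConditions_of_separating [Finite κ] {p : κ → σ → K} {n : ℕ}
    (h : ∀ c, ∃ f : MvPolynomial σ K, f.IsHomogeneous n ∧ eval (p c) f ≠ 0 ∧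
      ∀ c' ≠ c, eval (p c') f = 0) :
    ImposesIndependentConditions p n := by
  cases nonempty_fintype κ
  choose f hom hne hzero using h
  refine fun y ↦ ⟨∑ c, C (y c / eval (p c) (f c)) * f c,
    IsHomogeneous.sum _ _ _ fun c _ ↦ (hom c).C_mul _, fun c ↦ ?_⟩
  rw [map_sum, Finset.sum_eq_single c]
  · simp [hne c]
  · intro c' _ hc'
    simp [hzero c' c hc'.symm]
  · simp

-- Each point is separated from the others by the product of the `ℓ k` not vanishing at it.
theorem imposesIndependentConditions_of_star {ι : Type*} [Fintype ι] [Finite κ]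
    {ℓ : ι → MvPolynomial σ K} (hℓ : ∀ k, (ℓ k).IsHomogeneous 1) {p : κ → σ → K}
    (hp : ∀ c, p c ≠ 0) {s : κ → Finset ι} (hzero : ∀ c k, eval (p c) (ℓ k) = 0 ↔ k ∈ s c)
    (hs : ∀ c c', s c ⊆ s c' → c = c') {n : ℕ} (hn : ∀ c, Fintype.card ι ≤ n + (s c).card) :
    ImposesIndependentConditions p n := by
  classical
  refine imposesIndependentConditions_of_separating fun c ↦ ?_
  obtain ⟨i, hi⟩ := Function.ne_iff.1 (hp c)
  have hprod : (∏ k ∈ (s c)ᶜ, ℓ k).IsHomogeneous (s c)ᶜ.card := by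
    simpa using IsHomogeneous.prod (s c)ᶜ ℓ (fun _ ↦ 1) fun k _ ↦ hℓ k
  have hdeg : n - (s c)ᶜ.card + (s c)ᶜ.card = n := by
    have := hn c
    rw [Finset.card_compl]
    lia
  refine ⟨X i ^ (n - (s c)ᶜ.card) * ∏ k ∈ (s c)ᶜ, ℓ k,
    hdeg ▸ (isHomogeneous_X_pow i _).mul hprod, ?_, fun c' hc' ↦ ?_⟩
  · rw [map_mul, map_pow, eval_X, map_prod]
    refine mul_ne_zero (pow_ne_zero _ hi) (Finset.prod_ne_zero_iff.2 fun k hk ↦ ?_)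
    rwa [Ne, hzero, ← Finset.mem_compl]
  · obtain ⟨k, hk', hk⟩ := Finset.not_subset.1 (mt (hs c' c) hc')
    rw [map_mul, map_prod, Finset.prod_eq_zero (Finset.mem_compl.2 hk) ((hzero c' k).2 hk'),
      mul_zero]

end VanishingForms

section ConicTangents

variable {R : Type*} [CommRing R]

/-- The determinant of two homogeneous parameters on the projective line. -/
def bracket (s t : R × R) : R := s.1 * t.2 - s.2 * t.1

/-- The equation of the conic `y₂² = 4 y₀ y₁`, parametrized by `(t₁², t₂², 2 t₁ t₂)`. -/
noncomputable def conic (R : Type*) [CommRing R] : MvPolynomial (Fin 3) R :=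
  X 2 ^ 2 - 4 * (X 0 * X 1)

/-- The equation of the tangent line to `conic` at the point with parameter `t`. -/
noncomputable def tangentLine (t : R × R) : MvPolynomial (Fin 3) R :=
  C (t.2 ^ 2) * X 0 + C (t.1 ^ 2) * X 1 - C (t.1 * t.2) * X 2

/-- The intersection point of the tangent lines to `conic` with parameters `s` and `t`. -/
def tangentMeet (s t : R × R) : Fin 3 → R :=
  ![s.1 * t.1, s.2 * t.2, s.1 * t.2 + s.2 * t.1]

theorem tangentMeet_comm (s t : R × R) : tangentMeet s t = tangentMeet t s := by
  simp [tangentMeet, mul_comm, add_comm]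

theorem isHomogeneous_tangentLine (t : R × R) : (tangentLine t).IsHomogeneous 1 :=
  ((isHomogeneous_C_mul_X _ _).add (isHomogeneous_C_mul_X _ _)).sub (isHomogeneous_C_mul_X _ _)

theorem eval_tangentMeet_tangentLine (r s t : R × R) :
    eval (tangentMeet s t) (tangentLine r) = bracket r s * bracket r t := by
  simp only [tangentMeet, tangentLine, bracket, map_sub, map_add, map_mul, eval_C, eval_X,
    Matrix.cons_val]
  ring

theorem eval_tangentMeet_conic (s t : R × R) :
    eval (tangentMeet s t) (conic R) = bracket s t ^ 2 := by
  simp only [tangentMeet, conic, bracket, map_sub, map_mul, map_pow, map_ofNat, eval_X,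
    Matrix.cons_val]
  ring

theorem exists_eq_smul_tangentMeet {K : Type*} [Field K] {s t : K × K} (hst : bracket s t ≠ 0)
    {q : Fin 3 → K} (hs : eval q (tangentLine s) = 0) (ht : eval q (tangentLine t) = 0) :
    ∃ c : K, q = c • tangentMeet s t := by
  simp only [tangentLine, map_sub, map_add, map_mul, eval_C, eval_X] at hs ht
  -- The coefficient is the pairing of `q` with the meeting point under the polar form of the conic.
  refine ⟨(q 2 * (s.1 * t.2 + s.2 * t.1) - 2 * (q 0 * (s.2 * t.2) + q 1 * (s.1 * t.1))) /
    bracket s t ^ 2, ?_⟩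
  ext i
  rw [Pi.smul_apply, smul_eq_mul, div_mul_eq_mul_div, eq_div_iff (pow_ne_zero 2 hst)]
  fin_cases i <;> simp only [tangentMeet, bracket, Fin.mk_one, Fin.zero_eta, Fin.reduceFinMk,
    Matrix.cons_val]
  · linear_combination t.1 ^ 2 * hs + s.1 ^ 2 * ht
  · linear_combination t.2 ^ 2 * hs + s.2 ^ 2 * ht
  · linear_combination 2 * t.1 * t.2 * hs + 2 * s.1 * s.2 * ht

end ConicTangents

section Projection

/-- The vertex of the pencil of planes `polyF k = 0`: a vector spanning their intersection. -/
def apex : Fin 4 → ℂ := ![0, 0, 1, -1]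

/-- The linear projection with kernel spanned by `apex`. -/
def projection (x : Fin 4 → ℂ) : Fin 3 → ℂ := ![x 0, x 1, x 2 + x 3]

/-- The pullback of polynomials along `projection`. -/
noncomputable def pullback : MvPolynomial (Fin 3) ℂ →ₐ[ℂ] MvPolynomial (Fin 4) ℂ :=
  aeval ![X 0, X 1, X 2 + X 3]

/-- A linear form not vanishing at `apex`: together with the pullbacks of the three coordinates it
forms a system of linear coordinates. -/
noncomputable def axialForm : MvPolynomial (Fin 4) ℂ := X 2 - X 3

/-- The derivative in the direction of `apex`. -/
noncomputable def axialDeriv : Derivation ℂ (MvPolynomial (Fin 4) ℂ) (MvPolynomial (Fin 4) ℂ) :=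
  pderiv 2 - pderiv 3

theorem eval_pullback (x : Fin 4 → ℂ) (a : MvPolynomial (Fin 3) ℂ) :
    eval x (pullback a) = eval (projection x) a := by
  have hcomp : (aeval x).comp pullback = aeval (R := ℂ) (projection x) := by
    ext i
    fin_cases i <;> simp [pullback, projection]
  simpa [coe_aeval_eq_eval] using DFunLike.congr_fun hcomp a

theorem isHomogeneous_pullback {a : MvPolynomial (Fin 3) ℂ} {n : ℕ} (ha : a.IsHomogeneous n) :
    (pullback a).IsHomogeneous n := by
  rw [← one_mul n]
  refine ha.aeval _ fun i ↦ ?_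
  fin_cases i
  · exact isHomogeneous_X ℂ 0
  · exact isHomogeneous_X ℂ 1
  · exact (isHomogeneous_X ℂ 2).add (isHomogeneous_X ℂ 3)

theorem isHomogeneous_axialForm : axialForm.IsHomogeneous 1 :=
  (isHomogeneous_X ℂ _).sub (isHomogeneous_X ℂ _)

theorem isHomogeneous_polyS : polyS.IsHomogeneous 2 :=
  ((isHomogeneous_X ℂ _).mul (isHomogeneous_X ℂ _)).sub
    ((isHomogeneous_X ℂ _).mul (isHomogeneous_X ℂ _))

theorem axialDeriv_pullback (a : MvPolynomial (Fin 3) ℂ) : axialDeriv (pullback a) = 0 := by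
  induction a using MvPolynomial.induction_on with
  | C c => simp [pullback, axialDeriv]
  | add p q hp hq => rw [map_add, map_add, hp, hq, add_zero]
  | mul_X p i hp =>
    have hX : axialDeriv (pullback (X i)) = 0 := by
      fin_cases i <;> simp [pullback, axialDeriv, pderiv_X]
    rw [map_mul, Derivation.leibniz, hp, hX, smul_zero, smul_zero, add_zero]

theorem axialDeriv_axialForm : axialDeriv axialForm = 2 := by
  simp [axialDeriv, axialForm, pderiv_X, one_add_one_eq_two]

theorem axialDeriv_polyS : axialDeriv polyS = axialForm := by
  simp [axialDeriv, axialForm, polyS, pderiv_X, neg_add_eq_sub]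

theorem axialForm_sq : axialForm ^ 2 = pullback (conic ℂ) + 4 * polyS := by
  simp only [axialForm, conic, polyS, pullback, map_sub, map_mul, map_pow, map_ofNat, aeval_X,
    Matrix.cons_val]
  ring

theorem eval_axialForm_sq {x : Fin 4 → ℂ} (hx : eval x polyS = 0) :
    eval x axialForm ^ 2 = eval (projection x) (conic ℂ) := by
  rw [← map_pow, axialForm_sq, map_add, eval_pullback, map_mul, hx, mul_zero, add_zero]

theorem projection_smul (c : ℂ) (x : Fin 4 → ℂ) : projection (c • x) = c • projection x := by
  simp [projection, mul_add]

theorem eq_smul_add_smul_apex {w x : Fin 4 → ℂ} {c : ℂ} (h : projection w = c • projection x) :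
    w = c • x + (w 2 - c * x 2) • apex := by
  have h0 := congrFun h 0
  have h1 := congrFun h 1
  have h2 := congrFun h 2
  simp only [projection, Pi.smul_apply, smul_eq_mul, Matrix.cons_val] at h0 h1 h2
  ext i
  fin_cases i
  · simpa [apex] using h0
  · simpa [apex] using h1
  · simp [apex]
  · suffices w 3 = c * x 3 - (w 2 - c * x 2) by simpa [apex, sub_eq_add_neg] using this
    linear_combination h2

theorem eq_zero_of_projection_eq_zero {x : Fin 4 → ℂ} (hx : eval x polyS = 0)
    (h : projection x = 0) : x = 0 := by
  have haxial : eval x axialForm = 0 := by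
    have hsq := eval_axialForm_sq hx
    rw [h] at hsq
    simpa [conic] using hsq
  have h2 := congrFun h 2
  simp only [projection, Matrix.cons_val, Pi.zero_apply] at h2
  simp only [axialForm, map_sub, eval_X] at haxial
  ext i
  fin_cases i
  · simpa [projection] using congrFun h 0
  · simpa [projection] using congrFun h 1
  · change x 2 = 0
    linear_combination (h2 + haxial) / 2
  · change x 3 = 0
    linear_combination (h2 - haxial) / 2

theorem dirDeriv_apply (x w : Fin 4 → ℂ) (g : MvPolynomial (Fin 4) ℂ) :
    dirDeriv x w g = ∑ t, w t * eval x (pderiv t g) := by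
  simp [dirDeriv]

theorem dirDeriv_smul_add_smul (x v w : Fin 4 → ℂ) (c d : ℂ) (g : MvPolynomial (Fin 4) ℂ) :
    dirDeriv x (c • v + d • w) g = c * dirDeriv x v g + d * dirDeriv x w g := by
  simp only [dirDeriv_apply, Fin.sum_univ_four, Pi.add_apply, Pi.smul_apply, smul_eq_mul]
  ring

theorem dirDeriv_self {g : MvPolynomial (Fin 4) ℂ} {n : ℕ} (hg : g.IsHomogeneous n)
    (x : Fin 4 → ℂ) : dirDeriv x x g = n * eval x g := by
  simpa [dirDeriv_apply] using congrArg (eval x) hg.sum_X_mul_pderiv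

theorem dirDeriv_apex (x : Fin 4 → ℂ) (g : MvPolynomial (Fin 4) ℂ) :
    dirDeriv x apex g = eval x (axialDeriv g) := by
  simp [dirDeriv_apply, Fin.sum_univ_four, apex, axialDeriv, sub_eq_add_neg]

theorem dirDeriv_eq_zero_of_projection_eq_smul {g : MvPolynomial (Fin 4) ℂ} {n : ℕ}
    (hom : g.IsHomogeneous n) {x w : Fin 4 → ℂ} {c : ℂ} (hw : projection w = c • projection x)
    (hg : eval x g = 0) (haxial : eval x (axialDeriv g) = 0) : dirDeriv x w g = 0 := by
  rw [eq_smul_add_smul_apex hw, dirDeriv_smul_add_smul, dirDeriv_self hom, dirDeriv_apex, hg,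
    haxial, mul_zero, mul_zero, mul_zero, add_zero]

theorem isHomogeneous_axialDeriv {g : MvPolynomial (Fin 4) ℂ} {n : ℕ} (hg : g.IsHomogeneous n) :
    (axialDeriv g).IsHomogeneous (n - 1) :=
  hg.pderiv.sub hg.pderiv

end Projection

section Division

/-- Assembles a polynomial from its normal form `a + axialForm * b` modulo `polyS`, where `a` and
`b` are pulled back along `projection`, and the quotient `h`. -/
noncomputable def divisionMap :
    MvPolynomial (Fin 3) ℂ × MvPolynomial (Fin 3) ℂ × MvPolynomial (Fin 4) ℂ →ₗ[ℂ]
      MvPolynomial (Fin 4) ℂ :=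
  pullback.toLinearMap.coprod
    ((LinearMap.mulLeft ℂ axialForm ∘ₗ pullback.toLinearMap).coprod (LinearMap.mulLeft ℂ polyS))

variable {a b : MvPolynomial (Fin 3) ℂ} {h : MvPolynomial (Fin 4) ℂ}

theorem divisionMap_apply (a b : MvPolynomial (Fin 3) ℂ) (h : MvPolynomial (Fin 4) ℂ) :
    divisionMap (a, b, h) = pullback a + (axialForm * pullback b + polyS * h) := rfl

theorem eval_divisionMap {x : Fin 4 → ℂ} (hx : eval x polyS = 0) :
    eval x (divisionMap (a, b, h)) =
      eval (projection x) a + eval x axialForm * eval (projection x) b := by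
  simp [divisionMap_apply, eval_pullback, hx]

theorem eval_axialDeriv_divisionMap {x : Fin 4 → ℂ} (hx : eval x polyS = 0) :
    eval x (axialDeriv (divisionMap (a, b, h))) =
      2 * eval (projection x) b + eval x axialForm * eval x h := by
  simp only [divisionMap_apply, map_add, map_mul, map_zero, map_ofNat, Derivation.leibniz,
    axialDeriv_pullback, axialDeriv_axialForm, axialDeriv_polyS, smul_eq_mul, eval_pullback, hx]
  ring

-- The two points of the quadric over `q` are exchanged by the involution `axialForm ↦ -axialForm`.
theorem eval_eq_zero_of_eval_divisionMap_eq_zero {q : Fin 3 → ℂ}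
    (hq : ∀ x, projection x = q → eval x polyS = 0 → eval x (divisionMap (a, b, h)) = 0) :
    eval q a = 0 ∧ eval q (conic ℂ * b) = 0 := by
  obtain ⟨δ, hδ⟩ := IsAlgClosed.exists_pow_nat_eq (eval q (conic ℂ)) two_pos
  have key : ∀ ε : ℂ, ε ^ 2 = eval q (conic ℂ) → eval q a + ε * eval q b = 0 := by
    intro ε hε
    let x : Fin 4 → ℂ := ![q 0, q 1, (q 2 + ε) / 2, (q 2 - ε) / 2]
    have hproj : projection x = q := by
      ext i
      fin_cases i
      · rfl
      · rfl
      · change (q 2 + ε) / 2 + (q 2 - ε) / 2 = q 2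
        ring
    have hS : eval x polyS = 0 := by
      simp only [conic, map_sub, map_pow, map_mul, eval_X, map_ofNat] at hε
      simp only [polyS, map_sub, map_mul, eval_X, Matrix.cons_val, x]
      linear_combination hε / 4
    have haxial : eval x axialForm = ε := by
      simp only [axialForm, map_sub, eval_X, Matrix.cons_val, x]
      ring
    simpa [eval_divisionMap hS, hproj, haxial] using hq x hproj hS
  have hplus := key δ hδ
  have hminus := key (-δ) (by rw [neg_sq, hδ])
  refine ⟨by linear_combination (hplus + hminus) / 2, ?_⟩
  rw [map_mul, ← hδ]
  linear_combination δ * (hplus - hminus) / 2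

theorem eval_divisionMap_and_axialDeriv_eq_zero_iff {q : Fin 3 → ℂ}
    (hconic : eval q (conic ℂ) ≠ 0) :
    (∀ x, projection x = q → eval x polyS = 0 →
      eval x (divisionMap (a, b, h)) = 0 ∧ eval x (axialDeriv (divisionMap (a, b, h))) = 0) ↔
    eval q a = 0 ∧ eval q b = 0 ∧ ∀ x, projection x = q → eval x polyS = 0 → eval x h = 0 := by
  constructor
  · intro hg
    obtain ⟨ha, hcb⟩ := eval_eq_zero_of_eval_divisionMap_eq_zero fun x hx hS ↦ (hg x hx hS).1
    rw [map_mul] at hcb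
    have hb : eval q b = 0 := (mul_eq_zero.1 hcb).resolve_left hconic
    refine ⟨ha, hb, fun x hx hS ↦ ?_⟩
    have haxial : eval x axialForm ≠ 0 := by
      rwa [← hx, ← eval_axialForm_sq hS, pow_ne_zero_iff two_ne_zero] at hconic
    have hderiv := (hg x hx hS).2
    rw [eval_axialDeriv_divisionMap hS, hx, hb, mul_zero, zero_add] at hderiv
    exact (mul_eq_zero.1 hderiv).resolve_left haxial
  · rintro ⟨ha, hb, hh⟩ x hx hS
    rw [eval_divisionMap hS, eval_axialDeriv_divisionMap hS, hx, ha, hb, hh x hx hS]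
    simp

theorem conic_ne_zero : conic ℂ ≠ 0 := by
  intro h
  simpa [conic] using congrArg (eval ![0, 0, 1]) h

theorem polyS_ne_zero : polyS ≠ 0 := by
  intro h
  simpa [polyS] using congrArg (eval ![1, 1, 0, 0]) h

theorem divisionMap_injective : Function.Injective divisionMap := by
  rw [injective_iff_map_eq_zero]
  rintro ⟨a, b, h⟩ hzero
  have heval (q : Fin 3 → ℂ) : eval q a = 0 ∧ eval q (conic ℂ * b) = 0 :=
    eval_eq_zero_of_eval_divisionMap_eq_zero (h := h) fun x _ _ ↦ by rw [hzero, map_zero]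
  have ha : a = 0 := MvPolynomial.funext fun q ↦ by rw [(heval q).1, map_zero]
  have hconic : conic ℂ * b = 0 := MvPolynomial.funext fun q ↦ by rw [(heval q).2, map_zero]
  have hb : b = 0 := (mul_eq_zero.1 hconic).resolve_left conic_ne_zero
  have hS : polyS * h = 0 := by
    rwa [divisionMap_apply, ha, hb, map_zero, mul_zero, zero_add, zero_add] at hzero
  have hh : h = 0 := (mul_eq_zero.1 hS).resolve_left polyS_ne_zero
  simp only [ha, hb, hh, Prod.mk_zero_zero]

theorem isHomogeneous_divisionMap {n : ℕ} (ha : a.IsHomogeneous (n + 2))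
    (hb : b.IsHomogeneous (n + 1)) (hh : h.IsHomogeneous n) :
    (divisionMap (a, b, h)).IsHomogeneous (n + 2) := by
  have haxial := isHomogeneous_axialForm.mul (isHomogeneous_pullback hb)
  have hS := isHomogeneous_polyS.mul hh
  rw [add_comm] at haxial hS
  exact (isHomogeneous_pullback ha).add (haxial.add hS)

-- By injectivity, surjectivity reduces to two instances of Pascal's rule.
theorem exists_eq_divisionMap {g : MvPolynomial (Fin 4) ℂ} {n : ℕ} (hg : g.IsHomogeneous (n + 2)) :
    ∃ a b h, a.IsHomogeneous (n + 2) ∧ b.IsHomogeneous (n + 1) ∧ h.IsHomogeneous n ∧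
      g = divisionMap (a, b, h) := by
  let normalForms := (homogeneousSubmodule (Fin 3) ℂ (n + 2)).prod
    ((homogeneousSubmodule (Fin 3) ℂ (n + 1)).prod (homogeneousSubmodule (Fin 4) ℂ n))
  have hle : normalForms.map divisionMap ≤ homogeneousSubmodule (Fin 4) ℂ (n + 2) := by
    rintro _ ⟨⟨a, b, h⟩, ⟨ha, hb, hh⟩, rfl⟩
    exact isHomogeneous_divisionMap ha hb hh
  have heq : normalForms.map divisionMap = homogeneousSubmodule (Fin 4) ℂ (n + 2) := by
    refine Submodule.eq_of_le_of_finrank_eq hle ?_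
    rw [finrank_map_of_injective divisionMap_injective, finrank_submodule_prod,
      finrank_submodule_prod]
    simp only [finrank_homogeneousSubmodule, Fintype.card_fin, Nat.multichoose_succ_succ 3,
      add_assoc]
  obtain ⟨⟨a, b, h⟩, ⟨ha, hb, hh⟩, rfl⟩ := heq.ge hg
  exact ⟨a, b, h, ha, hb, hh, rfl⟩

end Division

section Cusps

/-- The parameters of the six tangent lines to `conic` whose pullbacks are the forms `polyF k`. -/
noncomputable def param : Fin 6 → ℂ × ℂ := ![(0, 1), (1, 0), (1, 2), (2, 1), (1, -1), (1, 1)]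

theorem polyF_eq_pullback (k : Fin 6) : polyF k = pullback (tangentLine (param k)) := by
  have hC2 : C 2 = (2 : MvPolynomial (Fin 4) ℂ) := map_ofNat C 2
  fin_cases k <;> simp [polyF, tangentLine, param, pullback, algebraMap_eq, hC2] <;> ring

theorem bracket_param_eq_zero_iff (i j : Fin 6) : bracket (param i) (param j) = 0 ↔ i = j := by
  fin_cases i <;> fin_cases j <;> norm_num [bracket, param]

/-- The vertex of the hexagram of tangent lines where the lines indexed by the two elements of `e`
meet. A diagonal `e` gives a point of tangency instead. -/
noncomputable def node : Sym2 (Fin 6) → Fin 3 → ℂ :=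
  Sym2.lift ⟨fun i j ↦ tangentMeet (param i) (param j), fun _ _ ↦ tangentMeet_comm _ _⟩

theorem eval_node_tangentLine_eq_zero_iff (e : Sym2 (Fin 6)) (k : Fin 6) :
    eval (node e) (tangentLine (param k)) = 0 ↔ k ∈ e := by
  induction e with
  | h i j =>
    rw [node, Sym2.lift_mk, eval_tangentMeet_tangentLine, mul_eq_zero, bracket_param_eq_zero_iff,
      bracket_param_eq_zero_iff, Sym2.mem_iff]

theorem eval_node_conic_ne_zero {e : Sym2 (Fin 6)} (he : ¬e.IsDiag) :
    eval (node e) (conic ℂ) ≠ 0 := by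
  induction e with
  | h i j =>
    rw [node, Sym2.lift_mk, eval_tangentMeet_conic]
    exact pow_ne_zero 2 ((bracket_param_eq_zero_iff i j).not.2 he)

theorem node_ne_zero {e : Sym2 (Fin 6)} (he : ¬e.IsDiag) : node e ≠ 0 := by
  intro h
  exact eval_node_conic_ne_zero he (by simp [h, conic])

/-- The fifteen points of the projective plane where two of the six tangent lines meet; the cusps
are the points of the quadric `polyS` above them. -/
noncomputable def nodes (e : {e : Sym2 (Fin 6) // ¬e.IsDiag}) : Fin 3 → ℂ := node e

theorem imposesIndependentConditions_nodes {n : ℕ} (hn : 4 ≤ n) :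
    ImposesIndependentConditions nodes n := by
  refine imposesIndependentConditions_of_star (fun k ↦ isHomogeneous_tangentLine (param k))
    (fun e ↦ node_ne_zero e.2) (s := fun e ↦ e.1.toFinset) (fun e k ↦ ?_) (fun e e' hle ↦ ?_)
    fun e ↦ ?_
  · rw [Sym2.mem_toFinset]
    exact eval_node_tangentLine_eq_zero_iff e k
  · have heq := Finset.eq_of_subset_of_card_le hle (by
      rw [Sym2.card_toFinset_of_not_isDiag _ e.2, Sym2.card_toFinset_of_not_isDiag _ e'.2])
    refine Subtype.ext (Sym2.ext fun k ↦ ?_)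
    rw [← Sym2.mem_toFinset, heq, Sym2.mem_toFinset]
  · rw [Sym2.card_toFinset_of_not_isDiag _ e.2, Fintype.card_fin]
    lia

theorem finrank_vanishingForms_nodes {n : ℕ} (hn : 4 ≤ n) :
    Module.finrank ℂ (vanishingForms nodes n) + 15 = Nat.multichoose 3 n := by
  have hcard := finrank_vanishingForms_add_card (imposesIndependentConditions_nodes hn)
  rwa [Sym2.card_subtype_not_diag, Fintype.card_fin, Fintype.card_fin] at hcard

theorem vanishingForms_nodes_four : vanishingForms nodes 4 = ⊥ := by
  refine Submodule.finrank_eq_zero.1 ?_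
  have := finrank_vanishingForms_nodes le_rfl
  simpa [Nat.multichoose] using this

theorem eval_polyF_s6 (x : Fin 4 → ℂ) (k : Fin 6) :
    eval x (polyF k) = eval (projection x) (tangentLine (param k)) := by
  rw [polyF_eq_pullback, eval_pullback]

theorem eval_apex_polyF (k : Fin 6) : eval apex (polyF k) = 0 := by
  rw [eval_polyF_s6]
  simp [projection, apex, tangentLine]

theorem exists_projection_eq_smul_nodes {i j : Fin 6} (hij : i ≠ j) {x : Fin 4 → ℂ}
    (hi : eval x (polyF i) = 0) (hj : eval x (polyF j) = 0) :
    ∃ c : ℂ, projection x = c • nodes ⟨s(i, j), hij⟩ :=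
  exists_eq_smul_tangentMeet ((bracket_param_eq_zero_iff i j).not.2 hij)
    (eval_polyF_s6 x i ▸ hi) (eval_polyF_s6 x j ▸ hj)

theorem mem_sexticsAdaptedToCusps {g : MvPolynomial (Fin 4) ℂ} :
    g ∈ sexticsAdaptedToCusps ↔ g.IsHomogeneous 6 ∧ ∀ i j, i ≠ j → ∀ x, x ≠ 0 →
      eval x (polyF i) = 0 → eval x (polyF j) = 0 → eval x polyS = 0 →
      eval x g = 0 ∧ ∀ w, eval w (polyF i) = 0 → eval w (polyF j) = 0 → dirDeriv x w g = 0 := by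
  simp only [sexticsAdaptedToCusps, Submodule.mem_inf, Submodule.mem_iInf, LinearMap.mem_ker,
    mem_homogeneousSubmodule, and_imp, AlgHom.toLinearMap_apply]
  refine and_congr_right fun _ ↦ ⟨fun hg i j hij x hx hi hj hS ↦ ?_,
    fun hg i j hij ↦ hg i j hij.ne⟩
  rcases hij.lt_or_gt with hlt | hgt
  · exact hg i j hlt x hx hi hj hS
  · obtain ⟨hgx, hdg⟩ := hg j i hgt x hx hj hi hS
    exact ⟨hgx, fun w hwi hwj ↦ hdg w hwj hwi⟩

theorem mem_sexticsAdaptedToCusps_iff_nodes {g : MvPolynomial (Fin 4) ℂ} :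
    g ∈ sexticsAdaptedToCusps ↔ g.IsHomogeneous 6 ∧ ∀ e x, projection x = nodes e →
      eval x polyS = 0 → eval x g = 0 ∧ eval x (axialDeriv g) = 0 := by
  rw [mem_sexticsAdaptedToCusps]
  refine and_congr_right fun hom ↦ ⟨?_, fun hg i j hij x hx0 hxi hxj hS ↦ ?_⟩
  · rintro hg ⟨e, he⟩ x hx hS
    induction e with
    | h i j =>
      have hF (k : Fin 6) (hk : k ∈ s(i, j)) : eval x (polyF k) = 0 := by
        rw [eval_polyF_s6, hx]
        exact (eval_node_tangentLine_eq_zero_iff _ k).2 hk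
      have hx0 : x ≠ 0 := by
        rintro rfl
        exact node_ne_zero he (hx.symm.trans (by simp [projection]))
      obtain ⟨hgx, hdg⟩ := hg i j he x hx0 (hF i (Sym2.mem_mk_left i j))
        (hF j (Sym2.mem_mk_right i j)) hS
      exact ⟨hgx, dirDeriv_apex x g ▸ hdg apex (eval_apex_polyF i) (eval_apex_polyF j)⟩
  · obtain ⟨c, hc⟩ := exists_projection_eq_smul_nodes hij hxi hxj
    have hc0 : c ≠ 0 := by
      rintro rfl
      exact hx0 (eq_zero_of_projection_eq_zero hS (by rw [hc, zero_smul]))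
    obtain ⟨hgy, hdgy⟩ := hg ⟨s(i, j), hij⟩ (c⁻¹ • x)
      (by rw [projection_smul, hc, inv_smul_smul₀ hc0])
      (by rw [eval_smul_of_isHomogeneous isHomogeneous_polyS, hS, mul_zero])
    have hgx : eval x g = 0 := by
      rw [← smul_inv_smul₀ hc0 x, eval_smul_of_isHomogeneous hom, hgy, mul_zero]
    have hdgx : eval x (axialDeriv g) = 0 := by
      rw [← smul_inv_smul₀ hc0 x, eval_smul_of_isHomogeneous (isHomogeneous_axialDeriv hom), hdgy,
        mul_zero]
    refine ⟨hgx, fun w hwi hwj ↦ ?_⟩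
    obtain ⟨d, hd⟩ := exists_projection_eq_smul_nodes hij hwi hwj
    have hw : projection w = (d * c⁻¹) • projection x := by
      rw [hc, smul_smul, inv_mul_cancel_right₀ hc0, hd]
    exact dirDeriv_eq_zero_of_projection_eq_smul hom hw hgx hdgx

theorem divisionMap_mem_sexticsAdaptedToCusps_iff {a b : MvPolynomial (Fin 3) ℂ}
    {h : MvPolynomial (Fin 4) ℂ} (ha : a.IsHomogeneous 6) (hb : b.IsHomogeneous 5)
    (hh : h.IsHomogeneous 4) :
    divisionMap (a, b, h) ∈ sexticsAdaptedToCusps ↔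
      a ∈ vanishingForms nodes 6 ∧ b ∈ vanishingForms nodes 5 ∧
        ∀ e x, projection x = nodes e → eval x polyS = 0 → eval x h = 0 := by
  rw [mem_sexticsAdaptedToCusps_iff_nodes, mem_vanishingForms, mem_vanishingForms,
    and_iff_right (isHomogeneous_divisionMap ha hb hh), and_iff_right ha, and_iff_right hb,
    ← forall_and, ← forall_and]
  exact forall_congr' fun e ↦
    eval_divisionMap_and_axialDeriv_eq_zero_iff (eval_node_conic_ne_zero e.2)

theorem exists_polyS_mul_eq_of_eval_eq_zero {h : MvPolynomial (Fin 4) ℂ} (hh : h.IsHomogeneous 4)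
    (hzero : ∀ e x, projection x = nodes e → eval x polyS = 0 → eval x h = 0) :
    ∃ q : MvPolynomial (Fin 4) ℂ, q.IsHomogeneous 2 ∧ polyS * q = h := by
  obtain ⟨a, b, q, ha, hb, hq, rfl⟩ := exists_eq_divisionMap hh
  have hnode e := eval_eq_zero_of_eval_divisionMap_eq_zero (hzero e)
  have ha0 : a = 0 := by
    rw [← Submodule.mem_bot ℂ, ← vanishingForms_nodes_four]
    exact mem_vanishingForms.2 ⟨ha, fun e ↦ (hnode e).1⟩
  have hb0 : b = 0 := by
    rw [← Submodule.mem_bot ℂ, ← vanishingForms_eq_bot_of_succ vanishingForms_nodes_four]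
    refine mem_vanishingForms.2 ⟨hb, fun e ↦ ?_⟩
    have hcb := (hnode e).2
    rw [map_mul] at hcb
    exact (mul_eq_zero.1 hcb).resolve_left (eval_node_conic_ne_zero e.2)
  exact ⟨q, hq, by simp [divisionMap_apply, ha0, hb0]⟩

theorem sexticsAdaptedToCusps_eq_map :
    sexticsAdaptedToCusps = ((vanishingForms nodes 6).prod ((vanishingForms nodes 5).prod
      ((homogeneousSubmodule (Fin 4) ℂ 2).map (LinearMap.mulLeft ℂ polyS)))).map divisionMap := by
  refine le_antisymm (fun g hg ↦ ?_) ?_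
  · obtain ⟨a, b, h, ha, hb, hh, rfl⟩ :=
      exists_eq_divisionMap (mem_sexticsAdaptedToCusps.1 hg).1
    obtain ⟨ha', hb', hzero⟩ := (divisionMap_mem_sexticsAdaptedToCusps_iff ha hb hh).1 hg
    exact ⟨(a, b, h), ⟨ha', hb', exists_polyS_mul_eq_of_eval_eq_zero hh hzero⟩, rfl⟩
  · rintro _ ⟨⟨a, b, _⟩, ⟨ha, hb, q, hq, rfl⟩, rfl⟩
    refine (divisionMap_mem_sexticsAdaptedToCusps_iff (mem_vanishingForms.1 ha).1
      (mem_vanishingForms.1 hb).1 (isHomogeneous_polyS.mul hq)).2 ⟨ha, hb, fun e x _ hS ↦ ?_⟩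
    rw [map_mul, hS, zero_mul]

end Cusps

/-- The conditions at the `30` cusps have rank `55` on the `84`-dimensional space of
sextic forms: the space of adapted sextics has dimension `29`. -/
theorem finrank_sextics_adapted_to_cusps :
    Module.finrank ℂ ↥sexticsAdaptedToCusps = 29 := by
  have hsix : Module.finrank ℂ (vanishingForms nodes 6) + 15 = 28 :=
    (finrank_vanishingForms_nodes (by norm_num)).trans (by simp [Nat.multichoose])
  have hfive : Module.finrank ℂ (vanishingForms nodes 5) + 15 = 21 :=
    (finrank_vanishingForms_nodes (by norm_num)).trans (by simp [Nat.multichoose])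
  have htwo : Module.finrank ℂ (homogeneousSubmodule (Fin 4) ℂ 2) = 10 :=
    (finrank_homogeneousSubmodule (Fin 4) ℂ 2).trans (by simp [Nat.multichoose])
  rw [sexticsAdaptedToCusps_eq_map, finrank_map_of_injective divisionMap_injective,
    finrank_submodule_prod, finrank_submodule_prod,
    finrank_map_of_injective (f := LinearMap.mulLeft ℂ polyS) (mul_right_injective₀ polyS_ne_zero)]
  lia
end
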